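/- Let n ≥ 2 and let W ∈ ℝ^{n×n} be doubly stochastic. Define λ := max{ ‖Wᵀx‖₂² : x ∈ ℝⁿ, ‖x‖₂ = 1, Σ_i x_i = 0 }. Then for every real d×n matrix X one has ‖X(W − Π)‖_F² ≤ λ·‖X(I − Π)‖_F². -/

import Mathlib

open Matrix BigOperators Finset

/-- Squared Frobenius norm of a real matrix. -/
noncomputable def frobSq {m n : ℕ} (M : Matrix (Fin m) (Fin n) ℝ) : ℝ :=
  ∑ i, ∑ j, (M i j) ^ 2

/-- The n×n averaging matrix Π with all entries 1/n. -/
noncomputable def avgMat (n : ℕ) : Matrix (Fin n) (Fin n) ℝ :=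
  Matrix.of fun _ _ => (1 : ℝ) / n

/-!
Unit column sums of `W` mean `Π W = Π`, so `X (W - Π) = (X (I - Π)) W`. Since `(I - Π) 1 = 0`, every
row `y` of `X (I - Π)` has coordinate sum zero, and homogeneity gives `‖Wᵀ y‖² ≤ λ ‖y‖²` for each of
them; the squared Frobenius norm is the sum of these quantities over the rows.
-/

section UnitSphere

variable {E F : Type*} [SeminormedAddCommGroup E] [NormedSpace ℝ E]
  [SeminormedAddCommGroup F] [NormedSpace ℝ F]

lemma bddAbove_norm_apply_sq_image_sphere (T : E →L[ℝ] F) (S : Set E) :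
    BddAbove ((fun x => ‖T x‖ ^ 2) '' (S ∩ Metric.sphere 0 1)) := by
  refine ⟨‖T‖ ^ 2, ?_⟩
  rintro _ ⟨x, ⟨-, hx⟩, rfl⟩
  have hTx : ‖T x‖ ≤ ‖T‖ := T.unit_le_opNorm x (mem_sphere_zero_iff_norm.mp hx).le
  exact pow_le_pow_left₀ (norm_nonneg _) hTx 2

lemma norm_apply_sq_le_sSup_sphere_mul (T : E →L[ℝ] F) (S : Submodule ℝ E) {y : E} (hy : y ∈ S) :
    ‖T y‖ ^ 2 ≤ sSup ((fun x => ‖T x‖ ^ 2) '' (S ∩ Metric.sphere 0 1)) * ‖y‖ ^ 2 := by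
  rcases (norm_nonneg y).eq_or_lt with hy0 | hy0
  · have hTy : ‖T y‖ = 0 :=
      le_antisymm (by simpa [← hy0] using T.le_opNorm y) (norm_nonneg _)
    simp [hTy, ← hy0]
  · have hunit : ‖y‖⁻¹ • y ∈ (S : Set E) ∩ Metric.sphere 0 1 :=
      ⟨S.smul_mem _ hy, by simp [norm_smul, hy0.ne']⟩
    have hscale : ‖T y‖ ^ 2 / ‖y‖ ^ 2 = ‖T (‖y‖⁻¹ • y)‖ ^ 2 := by
      rw [map_smul, norm_smul, norm_inv, norm_norm, mul_pow, inv_pow, div_eq_inv_mul]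
    rw [← div_le_iff₀ (by positivity), hscale]
    exact le_csSup (bddAbove_norm_apply_sq_image_sphere T S) (Set.mem_image_of_mem _ hunit)

end UnitSphere

section ZeroSum

variable {ι κ : Type*} [Fintype ι] [Fintype κ]

/-- The constant `λ`: the supremum of `‖Wᵀ x‖²` over the unit vectors `x` with coordinate sum zero,
written in coordinates. It is `0` when there is no such vector, that is, when `ι` has at most one
element. -/
noncomputable def zeroSumGain (W : Matrix ι κ ℝ) : ℝ :=
  sSup {r : ℝ | ∃ x : ι → ℝ,
    (∑ i, (x i) ^ 2 = 1) ∧ (∑ i, x i = 0) ∧ r = ∑ i, (∑ j, W j i * x j) ^ 2}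

/-- The subspace of Euclidean space formed by the vectors with coordinate sum zero. -/
noncomputable def zeroSumSubspace (ι : Type*) [Fintype ι] : Submodule ℝ (EuclideanSpace ℝ ι) :=
  (ℝ ∙ WithLp.toLp 2 (1 : ι → ℝ))ᗮ

lemma mem_zeroSumSubspace {x : EuclideanSpace ℝ ι} : x ∈ zeroSumSubspace ι ↔ ∑ i, x i = 0 := by
  simp [zeroSumSubspace, Submodule.mem_orthogonal_singleton_iff_inner_right, PiLp.inner_apply]

lemma zeroSumGain_eq_sSup_norm_sq [DecidableEq ι] (W : Matrix ι κ ℝ) :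
    zeroSumGain W = sSup ((fun x => ‖(toEuclideanLin Wᵀ).toContinuousLinearMap x‖ ^ 2) ''
      (zeroSumSubspace ι ∩ Metric.sphere 0 1)) := by
  have hnorm (x : ι → ℝ) : ‖WithLp.toLp 2 x‖ = 1 ↔ ∑ i, x i ^ 2 = 1 := by
    rw [← EuclideanSpace.real_norm_sq_eq, pow_eq_one_iff_of_nonneg (norm_nonneg _) two_ne_zero]
  have happly (x : ι → ℝ) : ‖(toEuclideanLin Wᵀ).toContinuousLinearMap (WithLp.toLp 2 x)‖ ^ 2 =
      ∑ i, (∑ j, W j i * x j) ^ 2 := by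
    simp [EuclideanSpace.real_norm_sq_eq, mulVec, dotProduct]
  rw [zeroSumGain]
  congr 1
  ext r
  constructor
  · rintro ⟨x, hx1, hx0, rfl⟩
    exact ⟨WithLp.toLp 2 x, ⟨mem_zeroSumSubspace.mpr hx0,
      mem_sphere_zero_iff_norm.mpr ((hnorm x).mpr hx1)⟩, happly x⟩
  · rintro ⟨x, ⟨hx0, hx1⟩, rfl⟩
    exact ⟨x, (hnorm x).mp (mem_sphere_zero_iff_norm.mp hx1), mem_zeroSumSubspace.mp hx0, happly x⟩

lemma sum_vecMul_sq_le_zeroSumGain_mul (W : Matrix ι κ ℝ) {y : ι → ℝ} (hy : ∑ i, y i = 0) :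
    ∑ j, (y ᵥ* W) j ^ 2 ≤ zeroSumGain W * ∑ i, y i ^ 2 := by
  classical
  have h := norm_apply_sq_le_sSup_sphere_mul (toEuclideanLin Wᵀ).toContinuousLinearMap
    (zeroSumSubspace ι) (y := WithLp.toLp 2 y) (mem_zeroSumSubspace.mpr hy)
  rw [← zeroSumGain_eq_sSup_norm_sq] at h
  simpa [EuclideanSpace.real_norm_sq_eq, mulVec_transpose] using h

end ZeroSum

lemma frobSq_mul_le_zeroSumGain_mul {d m n : ℕ} (W : Matrix (Fin m) (Fin n) ℝ)
    {Y : Matrix (Fin d) (Fin m) ℝ} (hY : Y *ᵥ 1 = 0) :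
    frobSq (Y * W) ≤ zeroSumGain W * frobSq Y := by
  have hrow (k : Fin d) : ∑ i, Y k i = 0 := by simpa [mulVec, dotProduct] using congrFun hY k
  simp only [frobSq, mul_apply_eq_vecMul]
  rw [mul_sum]
  exact sum_le_sum fun k _ => sum_vecMul_sq_le_zeroSumGain_mul W (hrow k)

section AvgMat

variable {n : ℕ}

lemma avgMat_mulVec_one : avgMat n *ᵥ 1 = 1 := by
  ext i
  have : (n : ℝ) ≠ 0 := Nat.cast_ne_zero.mpr i.pos.ne'
  simp [avgMat, mulVec, dotProduct, this]

lemma avgMat_mul_eq_self {W : Matrix (Fin n) (Fin n) ℝ} (hcol : ∀ j, ∑ i, W i j = 1) :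
    avgMat n * W = avgMat n := by
  ext i j
  simp [mul_apply, avgMat, ← mul_sum, hcol]

end AvgMat

theorem spectral_contraction_general {n d : ℕ} {W : Matrix (Fin n) (Fin n) ℝ}
    (hcol : ∀ j, ∑ i, W i j = 1) (X : Matrix (Fin d) (Fin n) ℝ) :
    frobSq (X * (W - avgMat n)) ≤ zeroSumGain W * frobSq (X * (1 - avgMat n)) := by
  have hfactor : X * (W - avgMat n) = X * (1 - avgMat n) * W := by
    rw [Matrix.mul_assoc, Matrix.sub_mul, Matrix.one_mul, avgMat_mul_eq_self hcol]
  have hrows : (X * (1 - avgMat n)) *ᵥ 1 = 0 := by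
    rw [← mulVec_mulVec, sub_mulVec, one_mulVec, avgMat_mulVec_one, sub_self, mulVec_zero]
  rw [hfactor]
  exact frobSq_mul_le_zeroSumGain_mul W hrows

/-- for a doubly stochastic W and
λ = max{‖Wᵀx‖₂² : ‖x‖₂ = 1, Σᵢ xᵢ = 0}, one has
‖X(W − Π)‖_F² ≤ λ‖X(I − Π)‖_F². -/
theorem spectral_contraction (n d : ℕ) (hn : 2 ≤ n)
    (W : Matrix (Fin n) (Fin n) ℝ)
    (hnn : ∀ i j, 0 ≤ W i j)
    (hrow : ∀ i, ∑ j, W i j = 1)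
    (hcol : ∀ j, ∑ i, W i j = 1)
    (X : Matrix (Fin d) (Fin n) ℝ) :
    frobSq (X * (W - avgMat n)) ≤
      (sSup {r : ℝ | ∃ x : Fin n → ℝ,
          (∑ i, (x i) ^ 2 = 1) ∧ (∑ i, x i = 0) ∧
          r = ∑ i, (∑ j, W j i * x j) ^ 2}) *
        frobSq (X * ((1 : Matrix (Fin n) (Fin n) ℝ) - avgMat n)) :=
  spectral_contraction_general hcol X
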